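/- Let Ω ⊆ ℂⁿ be open, 1 ≤ q ≤ n, and let u be a smooth (0,q)-form with compactly supported coefficients on Ω. Then ∫_Ω |∂̄u|² dV + ∫_Ω |ϑu|² dV = Σ'_{|I|=q} Σ_{k=1}^n ∫_Ω |∂u_I/∂z̄_k|² dV. (This is the Morrey–Kohn–Hörmander identity for compactly supported forms, the special case τ ≡ 1 of the energy identity of Proposition 3.1.) -/

import Mathlib

open scoped BigOperators
open MeasureTheory

namespace HM

/-- The finset of strictly increasing multi-indices of length `q` with entries in `Fin n`. -/
def Incr (n q : ℕ) : Finset (Fin q → Fin n) :=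
  Finset.univ.filter (fun I => ∀ a b : Fin q, a < b → I a < I b)

/-- Prepend the index `k` to a `(q-1)`-tuple `J`, giving the `q`-tuple `kJ`. -/
def cons' {n : ℕ} (q : ℕ) (k : Fin n) (J : Fin (q - 1) → Fin n) : Fin q → Fin n :=
  fun i => if h : (i : ℕ) = 0 then k else J ⟨(i : ℕ) - 1, by have := i.isLt; omega⟩

/-- A (0,q)-coefficient system: an antisymmetric assignment of complex numbers to q-tuples
(hence vanishing on tuples with a repeated index). -/
def IsCoeff {n q : ℕ} (u : (Fin q → Fin n) → ℂ) : Prop :=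
  ∀ (σ : Equiv.Perm (Fin q)) (I : Fin q → Fin n),
    u (I ∘ σ) = ((Equiv.Perm.sign σ : ℤ) : ℂ) * u I

/-- `|u|²`, the sum of `|u_I|²` over strictly increasing multi-indices `I`. -/
noncomputable def nSq {n q : ℕ} (u : (Fin q → Fin n) → ℂ) : ℝ :=
  ∑ I ∈ Incr n q, ‖u I‖ ^ 2

/-- The Hessian form of a matrix `H` on coefficient systems:
`H(u,v) = Σ'_{|J|=q-1} Σ_{k,l} H_{lk} u_{lJ} conj(v_{kJ})`. -/
noncomputable def mForm {n : ℕ} (q : ℕ) (H : Matrix (Fin n) (Fin n) ℂ)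
    (u v : (Fin q → Fin n) → ℂ) : ℂ :=
  ∑ J ∈ Incr n (q - 1), ∑ k : Fin n, ∑ l : Fin n,
    H l k * u (cons' q l J) * star (v (cons' q k J))

/-- `σ^I_J`: the sign of the permutation rearranging `I` into `J`; `0` if `J` is not a
rearrangement of `I` (in particular `0` if `I` has a repeated entry). -/
def permSign {n p : ℕ} (I J : Fin p → Fin n) : ℤ :=
  if Function.Injective I then
    ∑ π : Equiv.Perm (Fin p), if J = I ∘ π then ((Equiv.Perm.sign π : ℤ)) else 0
  else 0

/-- The Wirtinger derivative `∂f/∂z_k` of a complex-valued function, via real Fréchet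
derivatives: `½(∂f/∂x_k − i ∂f/∂y_k)`. -/
noncomputable def dz {n : ℕ} (f : (Fin n → ℂ) → ℂ) (k : Fin n) (z : Fin n → ℂ) : ℂ :=
  (1/2 : ℂ) * (fderiv ℝ f z (Pi.single k 1) - Complex.I * fderiv ℝ f z (Pi.single k Complex.I))

/-- The Wirtinger derivative `∂f/∂z̄_k`: `½(∂f/∂x_k + i ∂f/∂y_k)`. -/
noncomputable def dzbar {n : ℕ} (f : (Fin n → ℂ) → ℂ) (k : Fin n) (z : Fin n → ℂ) : ℂ :=
  (1/2 : ℂ) * (fderiv ℝ f z (Pi.single k 1) + Complex.I * fderiv ℝ f z (Pi.single k Complex.I))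

/-- The mixed Wirtinger Hessian `∂²f/∂z_l∂z̄_k` of a real-valued function. -/
noncomputable def hessW {n : ℕ} (f : (Fin n → ℂ) → ℝ) (l k : Fin n) (z : Fin n → ℂ) : ℂ :=
  dz (fun w => dzbar (fun y => (f y : ℂ)) k w) l z

/-- The Hessian form `i∂∂̄f(u,u)(z) = Σ'_{|J|=q-1} Σ_{k,l} ∂²f/∂z_l∂z̄_k(z) u_{lJ} conj(u_{kJ})`. -/
noncomputable def hForm {n : ℕ} (q : ℕ) (f : (Fin n → ℂ) → ℝ)
    (u : (Fin q → Fin n) → ℂ) (z : Fin n → ℂ) : ℂ :=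
  ∑ J ∈ Incr n (q - 1), ∑ k : Fin n, ∑ l : Fin n,
    hessW f l k z * u (cons' q l J) * star (u (cons' q k J))

/-- Coefficient of `∂̄u` on the `(q+1)`-tuple `M`:
`(∂̄u)_M = Σ_k Σ'_{|J|=q} σ^{kJ}_M ∂u_J/∂z̄_k`. -/
noncomputable def dbarC {n : ℕ} (q : ℕ) (u : (Fin q → Fin n) → (Fin n → ℂ) → ℂ)
    (M : Fin (q + 1) → Fin n) (z : Fin n → ℂ) : ℂ :=
  ∑ k : Fin n, ∑ J ∈ Incr n q, ((permSign (cons' (q + 1) k J) M : ℤ) : ℂ) * dzbar (u J) k z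

/-- Coefficient of `ϑu` on the `(q-1)`-tuple `J`: `(ϑu)_J = −Σ_l ∂u_{lJ}/∂z_l`. -/
noncomputable def thetaC {n : ℕ} (q : ℕ) (u : (Fin q → Fin n) → (Fin n → ℂ) → ℂ)
    (J : Fin (q - 1) → Fin n) (z : Fin n → ℂ) : ℂ :=
  -∑ l : Fin n, dz (u (cons' q l J)) l z

/-- Pointwise `|∂̄u|²`. -/
noncomputable def dbarSq {n : ℕ} (q : ℕ) (u : (Fin q → Fin n) → (Fin n → ℂ) → ℂ)
    (z : Fin n → ℂ) : ℝ :=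
  ∑ M ∈ Incr n (q + 1), ‖dbarC q u M z‖ ^ 2

/-- Pointwise `|ϑu|²`. -/
noncomputable def thetaSq {n : ℕ} (q : ℕ) (u : (Fin q → Fin n) → (Fin n → ℂ) → ℂ)
    (z : Fin n → ℂ) : ℝ :=
  ∑ J ∈ Incr n (q - 1), ‖thetaC q u J z‖ ^ 2

/-- Remove the `i`-th entry of a `j`-tuple, giving a `(j-1)`-tuple. -/
def removeIdx {n j : ℕ} (I : Fin j → Fin n) (i : Fin j) : Fin (j - 1) → Fin n :=
  fun t => if (t : ℕ) < (i : ℕ) then I ⟨t, by have := t.isLt; omega⟩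
    else I ⟨(t : ℕ) + 1, by have := t.isLt; omega⟩

/-- The increasing `j`-tuple listing a finset `S` (with default `d` out of range). -/
def sortedTuple {n : ℕ} (j : ℕ) (S : Finset (Fin n)) (d : Fin n) : Fin j → Fin n :=
  fun t => (S.sort (· ≤ ·)).getD t d

end HM

namespace HM
open Equiv

lemma sum_incr {n q : ℕ} (f : (Fin q → Fin n) → ℂ)
    (hs : ∀ (σ : Perm (Fin q)) I, f (I ∘ σ) = f I)
    (h0 : ∀ I, ¬ Function.Injective I → f I = 0) :
    (q.factorial : ℂ) * ∑ I ∈ Incr n q, f I = ∑ I, f I := by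
  classical
  have h1 : ∑ x ∈ Incr n q ×ˢ (Finset.univ : Finset (Perm (Fin q))), f x.1
      = ∑ I with Function.Injective I, f I := by
    refine Finset.sum_bij (fun x _ => x.1 ∘ x.2) ?_ ?_ ?_ ?_
    · rintro ⟨J, σ⟩ h
      simp only [Incr, Finset.mem_product, Finset.mem_filter, Finset.mem_univ, true_and,
        and_true] at h ⊢
      have : StrictMono J := fun a b => h a b
      exact this.injective.comp σ.injective
    · rintro ⟨J, σ⟩ h ⟨J', σ'⟩ h' e
      simp only [Incr, Finset.mem_product, Finset.mem_filter, Finset.mem_univ, true_and,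
        and_true] at h h' e
      have m : StrictMono J := fun a b => h a b
      have m' : StrictMono J' := fun a b => h' a b
      have e1 : J = J' := by
        rw [← m.range_inj m']
        rw [← σ.surjective.range_comp J, ← σ'.surjective.range_comp J', e]
      subst e1
      have : σ = σ' := by
        ext1 i
        exact m.injective (congrFun e i)
      rw [this]
    · intro I hI
      simp only [Finset.mem_filter, Finset.mem_univ, true_and] at hI
      refine ⟨(I ∘ Tuple.sort I, (Tuple.sort I)⁻¹), ?_, ?_⟩
      · simp only [Incr, Finset.mem_product, Finset.mem_filter, Finset.mem_univ, true_and,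
          and_true]
        have : StrictMono (I ∘ Tuple.sort I) :=
          (Tuple.monotone_sort I).strictMono_of_injective (hI.comp (Tuple.sort I).injective)
        exact fun a b h => this h
      · ext i; simp
    · rintro ⟨J, σ⟩ _
      exact (hs σ J).symm
  have h2 : ∑ I with Function.Injective I, f I = ∑ I, f I := by
    apply Finset.sum_filter_of_ne
    intro I _ h
    by_contra h'
    exact h (h0 I h')
  rw [← h2, ← h1, Finset.sum_product, Finset.mul_sum]
  simp [Fintype.card_perm]

lemma IsCoeff.zero {n q : ℕ} {u : (Fin q → Fin n) → ℂ} (h : IsCoeff u) (I : Fin q → Fin n)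
    (hI : ¬ Function.Injective I) : u I = 0 := by
  simp only [Function.Injective, not_forall] at hI
  obtain ⟨i, j, e, ne⟩ := hI
  have h1 := h (swap i j) I
  have h2 : I ∘ swap i j = I := by
    ext1 x
    simp only [Function.comp, swap_apply_def]
    split_ifs <;> simp_all
  rw [h2, Perm.sign_swap ne] at h1
  push_cast at h1
  linear_combination (1/2 : ℂ) * h1

lemma cons'_eq {n q : ℕ} (k : Fin n) (J : Fin q → Fin n) :
    cons' (q + 1) k J = (Fin.cons k J : Fin (q+1) → Fin n) := by
  ext1 i
  refine Fin.cases ?_ (fun j => ?_) i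
  · simp [cons']
  · simp [cons']

/-- extend a permutation by fixing zero -/
def ext0 {q : ℕ} (σ : Perm (Fin q)) : Perm (Fin (q+1)) := Perm.decomposeFin.symm (0, σ)

lemma ext0_zero {q : ℕ} (σ : Perm (Fin q)) : ext0 σ 0 = 0 := by simp [ext0]
lemma ext0_succ {q : ℕ} (σ : Perm (Fin q)) (i : Fin q) : ext0 σ i.succ = (σ i).succ := by
  simp [ext0]
lemma sign_ext0 {q : ℕ} (σ : Perm (Fin q)) : Perm.sign (ext0 σ) = Perm.sign σ := by
  simp [ext0, Perm.decomposeFin.symm_sign]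

lemma dec_eq {q : ℕ} (p : Fin (q+1)) (σ : Perm (Fin q)) :
    Perm.decomposeFin.symm (p, σ) = swap 0 p * ext0 σ := by
  ext1 i
  refine Fin.cases ?_ (fun j => ?_) i
  · simp [ext0_zero]
  · simp [ext0_succ]

lemma cons_comp {n q : ℕ} (k : Fin n) (J : Fin q → Fin n) (σ : Perm (Fin q)) :
    (Fin.cons k (J ∘ σ) : Fin (q+1) → Fin n) = (Fin.cons k J : Fin (q+1) → Fin n) ∘ ext0 σ := by
  ext1 i
  refine Fin.cases ?_ (fun j => ?_) i
  · simp [ext0_zero]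
  · simp [ext0_succ]

lemma sign_mul_self' {q : ℕ} (σ : Perm (Fin q)) :
    ((Perm.sign σ : ℤ) : ℂ) * ((Perm.sign σ : ℤ) : ℂ) = 1 := by
  rcases Int.units_eq_one_or (Perm.sign σ) with h | h <;> simp [h]

lemma permSign_inj {n p : ℕ} (I M : Fin p → Fin n) (hM : Function.Injective M) :
    permSign I M = ∑ π : Perm (Fin p), if I = M ∘ π then (Perm.sign π : ℤ) else 0 := by
  have h : permSign I M =
      ∑ π : Perm (Fin p), if M = I ∘ π then (Perm.sign π : ℤ) else 0 := by
    unfold permSign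
    split_ifs with hI
    · rfl
    · symm
      apply Finset.sum_eq_zero
      intro π _
      rw [if_neg]
      intro e
      apply hI
      have : I = M ∘ (π⁻¹ : Perm (Fin p)) := by ext1 i; simp [e]
      rw [this]
      exact hM.comp (Equiv.injective _)
  rw [h, ← Equiv.sum_comp (Equiv.inv (Perm (Fin p)))]
  apply Finset.sum_congr rfl
  intro π _
  simp only [Equiv.inv_apply, Perm.sign_inv]
  congr 1
  apply propext
  constructor
  · intro e; ext1 i; simp [e]
  · intro e; ext1 i; simp [e]

lemma permSign_comp {n p : ℕ} (I M : Fin p → Fin n) (hM : Function.Injective M)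
    (τ : Perm (Fin p)) :
    permSign (I ∘ τ) M = Perm.sign τ * permSign I M := by
  rw [permSign_inj _ _ hM, permSign_inj _ _ hM, Finset.mul_sum,
    ← Equiv.sum_comp (Equiv.mulRight τ)]
  apply Finset.sum_congr rfl
  intro π _
  simp only [Equiv.coe_mulRight, Perm.sign_mul, Perm.coe_mul, ← Function.comp_assoc]
  have : (I ∘ τ = (M ∘ π) ∘ τ) ↔ I = M ∘ π := by
    constructor
    · exact fun e => τ.surjective.injective_comp_right e
    · rintro rfl; rfl
  simp only [this]
  split_ifs <;> simp [mul_comm]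

lemma sum_cons {n q : ℕ} (F : (Fin (q+1) → Fin n) → ℂ) :
    ∑ k, ∑ J : Fin q → Fin n, F (Fin.cons k J : Fin (q+1) → Fin n) = ∑ N, F N := by
  rw [← Fintype.sum_prod_type']
  exact Equiv.sum_comp (Fin.consEquiv (fun _ => Fin n)) F

/-- flattened coefficients -/
def bb {n q : ℕ} (a : Fin n → (Fin q → Fin n) → ℂ) (N : Fin (q+1) → Fin n) : ℂ :=
  a (N 0) (Fin.tail N)

lemma bb_cons {n q : ℕ} (a : Fin n → (Fin q → Fin n) → ℂ) (k : Fin n) (J : Fin q → Fin n) :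
    bb a (Fin.cons k J : Fin (q+1) → Fin n) = a k J := by simp [bb]

lemma bb_ext0 {n q : ℕ} (a : Fin n → (Fin q → Fin n) → ℂ) (ha : ∀ k, IsCoeff (a k))
    (N : Fin (q+1) → Fin n) (σ : Perm (Fin q)) :
    bb a (N ∘ ext0 σ) = ((Perm.sign σ : ℤ) : ℂ) * bb a N := by
  unfold bb
  have : Fin.tail (N ∘ ext0 σ) = Fin.tail N ∘ σ := by
    ext1 i; simp [Fin.tail, ext0_succ]
  rw [this, ha]
  simp [ext0_zero]

/-- antisymmetrization -/
noncomputable def AA {n p : ℕ} (b : (Fin p → Fin n) → ℂ) (M : Fin p → Fin n) : ℂ :=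
  ∑ π : Perm (Fin p), ((Perm.sign π : ℤ) : ℂ) * b (M ∘ π)

lemma AA_coeff {n p : ℕ} (b : (Fin p → Fin n) → ℂ) : IsCoeff (AA b) := by
  intro σ M
  unfold AA
  rw [Finset.mul_sum, ← Equiv.sum_comp (Equiv.mulLeft σ) (fun π => _ * (_ * b (M ∘ π)))]
  apply Finset.sum_congr rfl
  intro π _
  simp only [Equiv.coe_mulLeft, Perm.sign_mul, Perm.coe_mul, ← Function.comp_assoc]
  push_cast
  linear_combination (-(((Perm.sign π : ℤ) : ℂ) * b ((M ∘ σ) ∘ π))) * sign_mul_self' σ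

lemma dbar_eq {n q : ℕ} (a : Fin n → (Fin q → Fin n) → ℂ) (ha : ∀ k, IsCoeff (a k))
    (M : Fin (q+1) → Fin n) (hM : Function.Injective M) :
    (q.factorial : ℂ) * ∑ k : Fin n, ∑ J ∈ Incr n q,
      ((permSign (cons' (q + 1) k J) M : ℤ) : ℂ) * a k J = AA (bb a) M := by
  have h1 : ∀ k : Fin n, (q.factorial : ℂ) * ∑ J ∈ Incr n q,
      ((permSign (cons' (q + 1) k J) M : ℤ) : ℂ) * a k J
      = ∑ J, ((permSign (Fin.cons k J : Fin (q+1) → Fin n) M : ℤ) : ℂ) * a k J := by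
    intro k
    simp only [cons'_eq]
    apply sum_incr
    · intro σ J
      rw [cons_comp, permSign_comp _ _ hM, ha, sign_ext0]
      push_cast
      linear_combination ((permSign (Fin.cons k J : Fin (q+1) → Fin n) M : ℂ) * a k J)
        * sign_mul_self' σ
    · intro I hI
      rw [(ha k).zero I hI, mul_zero]
  rw [Finset.mul_sum]
  simp only [h1]
  have h2 := sum_cons (fun N : Fin (q+1) → Fin n => ((permSign N M : ℤ) : ℂ) * bb a N)
  simp only [bb_cons] at h2
  rw [h2]
  simp only [permSign_inj _ _ hM]
  push_cast
  simp only [Finset.sum_mul]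
  rw [Finset.sum_comm]
  unfold AA
  apply Finset.sum_congr rfl
  intro π _
  simp [ite_mul]

lemma sum_comp_perm {n p : ℕ} (F : (Fin p → Fin n) → ℂ) (π : Perm (Fin p)) :
    ∑ M : Fin p → Fin n, F (M ∘ π) = ∑ M, F M :=
  Equiv.sum_comp (Equiv.arrowCongr π.symm (Equiv.refl (Fin n))) F

lemma AA_sq {n p : ℕ} (b : (Fin p → Fin n) → ℂ) :
    ∑ M ∈ Incr n p, AA b M * star (AA b M) = ∑ M, AA b M * star (b M) := by
  have h := sum_incr (n := n) (q := p) (fun M => AA b M * star (AA b M)) (by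
      intro σ I
      simp only [AA_coeff b σ I, star_mul']
      rcases Int.units_eq_one_or (Perm.sign σ) with h | h <;> simp [h])
    (by intro I hI; simp [(AA_coeff b).zero I hI])
  have h2 : ∑ M, AA b M * star (AA b M) = (p.factorial : ℂ) * ∑ M, AA b M * star (b M) := by
    have : ∀ M, AA b M * star (AA b M)
        = ∑ π : Perm (Fin p), AA b (M ∘ π) * star (b (M ∘ π)) := by
      intro M
      conv_lhs => rw [show star (AA b M) = star (∑ π : Perm (Fin p), ((Perm.sign π : ℤ) : ℂ) * b (M ∘ π)) from rfl]
      rw [star_sum, Finset.mul_sum]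
      apply Finset.sum_congr rfl
      intro π _
      rw [AA_coeff b π M, star_mul']
      simp
      ring
    simp only [this]
    rw [Finset.sum_comm]
    simp only [sum_comp_perm (fun M => AA b M * star (b M))]
    simp [Fintype.card_perm]
  rw [h2] at h
  exact mul_left_cancel₀ (by exact_mod_cast p.factorial_ne_zero) h

lemma AA_dec {n q : ℕ} (a : Fin n → (Fin q → Fin n) → ℂ) (ha : ∀ k, IsCoeff (a k))
    (M : Fin (q+1) → Fin n) :
    AA (bb a) M = (q.factorial : ℂ) *
      ∑ p : Fin (q+1), (if p = 0 then 1 else -1) * bb a (M ∘ swap 0 p) := by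
  unfold AA
  rw [← Equiv.sum_comp Perm.decomposeFin.symm, Fintype.sum_prod_type, Finset.mul_sum]
  apply Finset.sum_congr rfl
  intro p _
  have : ∀ σ : Perm (Fin q), ((Perm.sign (Perm.decomposeFin.symm (p, σ)) : ℤ) : ℂ)
      * bb a (M ∘ Perm.decomposeFin.symm (p, σ)) =
      (if p = 0 then 1 else -1) * bb a (M ∘ swap 0 p) := by
    intro σ
    rw [Perm.decomposeFin.symm_sign, dec_eq, Perm.coe_mul, ← Function.comp_assoc, bb_ext0 a ha]
    push_cast
    split_ifs
    · push_cast
      linear_combination (bb a (M ∘ swap 0 p)) * sign_mul_self' σ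
    · push_cast
      linear_combination (-bb a (M ∘ swap 0 p)) * sign_mul_self' σ
  simp only [this]
  simp [Fintype.card_perm]

lemma swap_term {n r : ℕ} (a : Fin n → (Fin (r+1) → Fin n) → ℂ) (ha : ∀ k, IsCoeff (a k))
    (j : Fin (r+1)) :
    ∑ M : Fin (r+2) → Fin n, bb a (M ∘ swap 0 j.succ) * star (bb a M)
     = ∑ M : Fin (r+2) → Fin n, bb a (M ∘ swap 0 1) * star (bb a M) := by
  rw [← sum_comp_perm (fun M => bb a (M ∘ swap 0 j.succ) * star (bb a M)) (ext0 (swap 0 j))]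
  apply Finset.sum_congr rfl
  intro M _
  have h : (M ∘ ext0 (swap 0 j)) ∘ swap 0 j.succ = (M ∘ swap 0 1) ∘ ext0 (swap 0 j) := by
    have : ext0 (swap 0 j) * swap 0 j.succ = swap 0 1 * ext0 (swap 0 j) := by
      rw [Equiv.mul_swap_eq_swap_mul, ext0_zero, ext0_succ]
      simp
    rw [Function.comp_assoc, Function.comp_assoc, ← Perm.coe_mul, ← Perm.coe_mul, this]
  rw [h, bb_ext0 a ha, bb_ext0 a ha, star_mul']
  rcases Int.units_eq_one_or (Perm.sign (swap 0 j)) with h | h <;> simp [h]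

lemma comb {n r : ℕ} (a : Fin n → (Fin (r+1) → Fin n) → ℂ) (ha : ∀ k, IsCoeff (a k))
    (D : (Fin (r+2) → Fin n) → ℂ)
    (hD : ∀ M, D M = ∑ k : Fin n, ∑ J ∈ Incr n (r+1),
      ((permSign (cons' (r+1+1) k J) M : ℤ) : ℂ) * a k J) :
    ∑ M ∈ Incr n (r+1+1), D M * star (D M)
     = (∑ I ∈ Incr n (r+1), ∑ k, a k I * star (a k I))
      - ∑ J ∈ Incr n r, ∑ k, ∑ l, a l (cons' (r+1) k J) * star (a k (cons' (r+1) l J)) := by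
  have e1 : ((r+1).factorial : ℂ) * ((r+1).factorial : ℂ) * ∑ M ∈ Incr n (r+1+1), D M * star (D M)
      = ∑ M ∈ Incr n (r+1+1), AA (bb a) M * star (AA (bb a) M) := by
    rw [Finset.mul_sum]
    apply Finset.sum_congr rfl
    intro M hM
    have hM' : StrictMono M := by
      simp only [Incr, Finset.mem_filter, Finset.mem_univ, true_and] at hM
      exact fun a b => hM a b
    rw [← dbar_eq a ha M hM'.injective, ← hD, star_mul']
    simp
    ring
  have e2 : ∑ M : Fin (r+2) → Fin n, AA (bb a) M * star (bb a M) = ((r+1).factorial : ℂ) *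
      ((∑ M : Fin (r+2) → Fin n, bb a M * star (bb a M)) -
       (r+1 : ℂ) * ∑ M : Fin (r+2) → Fin n, bb a (M ∘ swap 0 1) * star (bb a M)) := by
    simp only [AA_dec a ha, mul_assoc, Finset.sum_mul]
    rw [← Finset.mul_sum, Finset.sum_comm, Fin.sum_univ_succ]
    congr 1
    simp only [Fin.succ_ne_zero, if_true, if_false, neg_mul, one_mul, Finset.sum_neg_distrib,
      swap_term a ha, swap_self]
    simp
    ring
  have e3 : ∑ M : Fin (r+2) → Fin n, bb a M * star (bb a M)
      = ((r+1).factorial : ℂ) * ∑ I ∈ Incr n (r+1), ∑ k, a k I * star (a k I) := by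
    rw [sum_incr, ← sum_cons, Finset.sum_comm]
    · simp only [bb_cons]
    · intro σ I
      apply Finset.sum_congr rfl
      intro k _
      rw [ha, star_mul']
      rcases Int.units_eq_one_or (Perm.sign σ) with h | h <;> simp [h]
    · intro I hI
      apply Finset.sum_eq_zero
      intro k _
      rw [(ha k).zero I hI, zero_mul]
  have e4 : ∑ M : Fin (r+2) → Fin n, bb a (M ∘ swap 0 1) * star (bb a M)
      = (r.factorial : ℂ) * ∑ J ∈ Incr n r, ∑ k, ∑ l,
        a l (cons' (r+1) k J) * star (a k (cons' (r+1) l J)) := by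
    rw [sum_incr, ← sum_cons]
    · rw [Finset.sum_comm' (t' := Finset.univ) (s' := fun _ => Finset.univ) (by simp)]
      rw [Finset.sum_comm]
      have := fun k => sum_cons (q := r) (n := n) (fun J => bb a ((Fin.cons k J : Fin (r+2) → Fin n) ∘ swap 0 1)
        * star (bb a (Fin.cons k J : Fin (r+2) → Fin n)))
      simp only [← this]
      rw [Finset.sum_comm' (t' := Finset.univ) (s' := fun _ => Finset.univ) (by simp)]
      rw [Finset.sum_comm]
      have hs : ∀ k l (J : Fin r → Fin n),
          (Fin.cons k (Fin.cons l J : Fin (r+1) → Fin n) : Fin (r+2) → Fin n) ∘ swap 0 1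
          = (Fin.cons l (Fin.cons k J : Fin (r+1) → Fin n) : Fin (r+2) → Fin n) := by
        intro k l J
        ext1 i
        refine Fin.cases ?_ (fun i => Fin.cases ?_ (fun i => ?_) i) i
        · simp
        · simp
        · have : swap (0 : Fin (r+2)) 1 i.succ.succ = i.succ.succ :=
            swap_apply_of_ne_of_ne (Fin.succ_ne_zero _) (by
              rw [← Fin.succ_zero_eq_one, Ne, Fin.succ_inj]; exact Fin.succ_ne_zero _)
          simp [this]
      simp only [hs, bb_cons, cons'_eq]
      symm
      rw [Finset.sum_comm]
      apply Finset.sum_congr rfl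
      intro k _
      rw [Finset.sum_comm]
    · intro σ J
      apply Finset.sum_congr rfl
      intro k _
      apply Finset.sum_congr rfl
      intro l _
      simp only [cons'_eq]
      rw [cons_comp, cons_comp, ha, ha, star_mul', sign_ext0]
      rcases Int.units_eq_one_or (Perm.sign σ) with h | h <;> simp [h]
    · intro J hJ
      apply Finset.sum_eq_zero
      intro k _
      apply Finset.sum_eq_zero
      intro l _
      rw [(ha l).zero, zero_mul]
      rw [cons'_eq, Fin.cons_injective_iff]
      tauto
  have hf : ((r+1).factorial : ℂ) ≠ 0 := by exact_mod_cast (r+1).factorial_ne_zero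
  have e5 := e1.trans ((AA_sq (bb a)).trans e2)
  rw [e3, e4] at e5
  apply mul_left_cancel₀ (mul_ne_zero hf hf)
  rw [e5]
  have : ((r+1).factorial : ℂ) = (r+1) * (r.factorial : ℂ) := by
    rw [Nat.factorial_succ]; push_cast; ring
  rw [this]
  ring

end HM

namespace HM
open ComplexConjugate

section
variable {n : ℕ}

/-- smooth compactly supported -/
def SC (f : (Fin n → ℂ) → ℂ) : Prop := ContDiff ℝ (⊤ : ℕ∞) f ∧ HasCompactSupport f

lemma SC.fd {f : (Fin n → ℂ) → ℂ} (hf : SC f) (v : Fin n → ℂ) :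
    SC (fun z => fderiv ℝ f z v) := by
  refine ⟨?_, hf.2.fderiv_apply (𝕜 := ℝ) v⟩
  have : ContDiff ℝ (⊤ : ℕ∞) (fderiv ℝ f) := hf.1.fderiv_right (by simp)
  exact this.clm_apply contDiff_const

lemma SC.mul {f g : (Fin n → ℂ) → ℂ} (hf : SC f) (hg : SC g) : SC (fun z => f z * g z) :=
  ⟨hf.1.mul hg.1, hf.2.mul_right⟩

lemma SC.add {f g : (Fin n → ℂ) → ℂ} (hf : SC f) (hg : SC g) : SC (fun z => f z + g z) :=
  ⟨hf.1.add hg.1, hf.2.add hg.2⟩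

lemma SC.smul {f : (Fin n → ℂ) → ℂ} (c : ℂ) (hf : SC f) : SC (fun z => c * f z) :=
  ⟨contDiff_const.mul hf.1, hf.2.mul_left⟩

lemma SC.conj {f : (Fin n → ℂ) → ℂ} (hf : SC f) : SC (fun z => conj (f z)) :=
  ⟨Complex.conjCLE.contDiff.comp hf.1, hf.2.comp_left (g := conj) (map_zero _)⟩

lemma SC.int {f : (Fin n → ℂ) → ℂ} (hf : SC f) : Integrable f :=
  hf.1.continuous.integrable_of_hasCompactSupport hf.2

lemma SC.dz {f : (Fin n → ℂ) → ℂ} (hf : SC f) (k : Fin n) : SC (dz f k) := by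
  have := (((hf.fd (Pi.single k 1)).add ((hf.fd (Pi.single k Complex.I)).smul (-Complex.I))).smul (1/2))
  convert this using 2
  unfold HM.dz; ring

lemma SC.dzbar {f : (Fin n → ℂ) → ℂ} (hf : SC f) (k : Fin n) : SC (dzbar f k) := by
  have := (((hf.fd (Pi.single k 1)).add ((hf.fd (Pi.single k Complex.I)).smul (Complex.I))).smul (1/2))
  exact this

lemma ibp {f g : (Fin n → ℂ) → ℂ} (hf : SC f) (hg : SC g) (v : Fin n → ℂ) :
    ∫ z, f z * fderiv ℝ g z v = - ∫ z, fderiv ℝ f z v * g z :=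
  integral_mul_fderiv_eq_neg_fderiv_mul_of_integrable ((hf.fd v).mul hg).int
    (hf.mul (hg.fd v)).int (hf.mul hg).int
    (fun x _ => (hf.1.differentiable (by simp)).differentiableAt)
    (fun x _ => (hg.1.differentiable (by simp)).differentiableAt)

lemma fd_symm {f : (Fin n → ℂ) → ℂ} (hf : SC f) (v w z : Fin n → ℂ) :
    fderiv ℝ (fun z => fderiv ℝ f z v) z w = fderiv ℝ (fun z => fderiv ℝ f z w) z v := by
  have hd : DifferentiableAt ℝ (fderiv ℝ f) z := by
    have : ContDiff ℝ (⊤ : ℕ∞) (fderiv ℝ f) := hf.1.fderiv_right (by simp)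
    exact (this.differentiable (by simp)).differentiableAt
  have hs : IsSymmSndFDerivAt ℝ f z :=
    hf.1.contDiffAt.isSymmSndFDerivAt (by
      rw [minSmoothness_of_isRCLikeNormedField]
      exact WithTop.coe_le_coe.2 (le_top : (2 : ℕ∞) ≤ ⊤))
  rw [fderiv_clm_apply hd (by fun_prop), fderiv_clm_apply hd (by fun_prop)]
  simpa using hs w v

lemma swapD {f g : (Fin n → ℂ) → ℂ} (hf : SC f) (hg : SC g) (v w : Fin n → ℂ) :
    ∫ z, fderiv ℝ f z v * fderiv ℝ g z w = ∫ z, fderiv ℝ f z w * fderiv ℝ g z v := by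
  rw [ibp (hf.fd v) hg w, ibp (hf.fd w) hg v]
  simp only [fd_symm hf v w]

lemma conj_dzbar {f : (Fin n → ℂ) → ℂ} (hf : SC f) (k : Fin n) (z : Fin n → ℂ) :
    conj (dzbar f k z) = dz (fun z => conj (f z)) k z := by
  have hd : DifferentiableAt ℝ f z := (hf.1.differentiable (by simp)).differentiableAt
  have : fderiv ℝ (fun z => conj (f z)) z
      = (Complex.conjCLE : ℂ →L[ℝ] ℂ).comp (fderiv ℝ f z) :=
    ((Complex.conjCLE : ℂ →L[ℝ] ℂ).hasFDerivAt.comp z hd.hasFDerivAt).fderiv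
  unfold dz dzbar
  rw [this]
  have h2 : conj (2 : ℂ) = 2 := Complex.conj_ofNat 2
  simp [h2]
  ring

lemma conj_dz {f : (Fin n → ℂ) → ℂ} (hf : SC f) (k : Fin n) (z : Fin n → ℂ) :
    conj (dz f k z) = dzbar (fun z => conj (f z)) k z := by
  have h := conj_dzbar hf.conj k z
  simp only [Complex.conj_conj] at h
  rw [show (fun z => f z) = f from rfl] at h
  rw [← h, Complex.conj_conj]

lemma swapW {f g : (Fin n → ℂ) → ℂ} (hf : SC f) (hg : SC g) (k l : Fin n) :
    ∫ z, dzbar f k z * dz g l z = ∫ z, dz f l z * dzbar g k z := by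
  have I4 : ∀ (F : Fin 4 → (Fin n → ℂ) → ℂ) (c : Fin 4 → ℂ), (∀ i, SC (F i)) →
      ∫ z, ∑ i, c i * F i z = ∑ i, c i * ∫ z, F i z := by
    intro F c hF
    rw [integral_finsetSum _ (fun i _ => ((hF i).smul (c i)).int)]
    simp only [integral_const_mul]
  have a1 := I4 ![fun z => fderiv ℝ f z (Pi.single k 1) * fderiv ℝ g z (Pi.single l 1),
    fun z => fderiv ℝ f z (Pi.single k 1) * fderiv ℝ g z (Pi.single l Complex.I),
    fun z => fderiv ℝ f z (Pi.single k Complex.I) * fderiv ℝ g z (Pi.single l 1),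
    fun z => fderiv ℝ f z (Pi.single k Complex.I) * fderiv ℝ g z (Pi.single l Complex.I)]
    ![1/4, -Complex.I/4, Complex.I/4, -Complex.I*Complex.I/4]
    (by intro i; fin_cases i <;> exact (hf.fd _).mul (hg.fd _))
  have a2 := I4 ![fun z => fderiv ℝ f z (Pi.single l 1) * fderiv ℝ g z (Pi.single k 1),
    fun z => fderiv ℝ f z (Pi.single l Complex.I) * fderiv ℝ g z (Pi.single k 1),
    fun z => fderiv ℝ f z (Pi.single l 1) * fderiv ℝ g z (Pi.single k Complex.I),
    fun z => fderiv ℝ f z (Pi.single l Complex.I) * fderiv ℝ g z (Pi.single k Complex.I)]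
    ![1/4, -Complex.I/4, Complex.I/4, -Complex.I*Complex.I/4]
    (by intro i; fin_cases i <;> exact (hf.fd _).mul (hg.fd _))
  simp only [Fin.sum_univ_four, Matrix.cons_val] at a1 a2
  rw [swapD hf hg (Pi.single k 1) (Pi.single l 1),
    swapD hf hg (Pi.single k 1) (Pi.single l Complex.I),
    swapD hf hg (Pi.single k Complex.I) (Pi.single l 1),
    swapD hf hg (Pi.single k Complex.I) (Pi.single l Complex.I), ← a2] at a1
  refine Eq.trans ?_ (a1.trans ?_)
  · congr 1
    funext z; unfold dz dzbar; ring
  · congr 1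
    funext z; unfold dz dzbar; ring

lemma swapC {f g : (Fin n → ℂ) → ℂ} (hf : SC f) (hg : SC g) (k l : Fin n) :
    ∫ z, dzbar f k z * star (dzbar g l z) = ∫ z, dz f l z * star (dz g k z) := by
  have h := swapW hf hg.conj k l
  simp only [← conj_dzbar hg, ← conj_dz hg] at h
  exact h

lemma fd_zero {f : (Fin n → ℂ) → ℂ} {z : Fin n → ℂ} (h : z ∉ tsupport f) : fderiv ℝ f z = 0 := by
  by_contra h'
  exact h (support_fderiv_subset ℝ h')

lemma coeff_dzbar {q : ℕ} (u : (Fin q → Fin n) → (Fin n → ℂ) → ℂ)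
    (hua : ∀ z, IsCoeff (fun I => u I z)) (hu : ∀ I, SC (u I)) (z : Fin n → ℂ) (k : Fin n) :
    IsCoeff (fun I => dzbar (u I) k z) := by
  intro σ I
  have h : u (I ∘ σ) = fun z => ((Equiv.Perm.sign σ : ℤ) : ℂ) * u I z := funext fun z => hua z σ I
  have hd : DifferentiableAt ℝ (u I) z := ((hu I).1.differentiable (by simp)).differentiableAt
  simp only [h, dzbar]
  rw [fderiv_const_mul hd]
  simp
  ring

end
end HM

/-- the Morrey–Kohn–Hörmander identity for compactly supported forms:
`∫|∂̄u|² + ∫|ϑu|² = Σ'_I Σ_k ∫ |∂u_I/∂z̄_k|²`. -/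
theorem morrey_kohn_hormander (n q : ℕ) (hn : 1 ≤ n) (hq1 : 1 ≤ q) (hqn : q ≤ n)
    (Ω : Set (Fin n → ℂ)) (hΩ : IsOpen Ω)
    (u : (Fin q → Fin n) → (Fin n → ℂ) → ℂ)
    (hua : ∀ z, HM.IsCoeff (fun I => u I z))
    (hus : ∀ I, ContDiff ℝ (⊤ : ℕ∞) (u I))
    (husupp : ∀ I, HasCompactSupport (u I))
    (husub : ∀ I, tsupport (u I) ⊆ Ω) :
    (∫ z in Ω, HM.dbarSq q u z) + (∫ z in Ω, HM.thetaSq q u z)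
      = ∑ I ∈ HM.Incr n q, ∑ k : Fin n, ∫ z in Ω, ‖HM.dzbar (u I) k z‖ ^ 2 := by
  obtain ⟨r, rfl⟩ : ∃ r, q = r + 1 := ⟨q - 1, by omega⟩
  have hu : ∀ I, HM.SC (u I) := fun I => ⟨hus I, husupp I⟩
  have hfd : ∀ I z, z ∉ Ω → fderiv ℝ (u I) z = 0 :=
    fun I z hz => HM.fd_zero (fun h => hz (husub I h))
  have hzb : ∀ I k z, z ∉ Ω → HM.dzbar (u I) k z = 0 := by
    intro I k z hz; simp [HM.dzbar, hfd I z hz]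
  have hzz : ∀ I k z, z ∉ Ω → HM.dz (u I) k z = 0 := by
    intro I k z hz; simp [HM.dz, hfd I z hz]
  rw [setIntegral_eq_integral_of_forall_compl_eq_zero (f := HM.dbarSq (r+1) u)
      (by intro z hz; simp [HM.dbarSq, HM.dbarC, hzb _ _ z hz]),
    setIntegral_eq_integral_of_forall_compl_eq_zero (f := HM.thetaSq (r+1) u)
      (by intro z hz; simp [HM.thetaSq, HM.thetaC, hzz _ _ z hz])]
  have h3 : ∀ I k, ∫ z in Ω, ‖HM.dzbar (u I) k z‖ ^ 2 = ∫ z, ‖HM.dzbar (u I) k z‖ ^ 2 :=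
    fun I k => setIntegral_eq_integral_of_forall_compl_eq_zero
      (by intro z hz; simp [hzb _ _ z hz])
  simp only [h3]
  have hsq : ∀ w : ℂ, ((‖w‖ : ℂ)) ^ 2 = w * star w := fun w => (Complex.mul_conj' w).symm
  have hI1 : ∀ I k, Integrable (fun z => HM.dzbar (u I) k z * star (HM.dzbar (u I) k z)) :=
    fun I k => (((hu I).dzbar k).mul ((hu I).dzbar k).conj).int
  have hI2 : ∀ I J k l, Integrable (fun z => HM.dzbar (u I) k z * star (HM.dzbar (u J) l z)) :=
    fun I J k l => (((hu I).dzbar k).mul ((hu J).dzbar l).conj).int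
  have hI3 : ∀ I J k l, Integrable (fun z => HM.dz (u I) k z * star (HM.dz (u J) l z)) :=
    fun I J k l => (((hu I).dz k).mul ((hu J).dz l).conj).int
  have hd : ∀ z, ((HM.dbarSq (r+1) u z : ℝ) : ℂ)
      = (∑ I ∈ HM.Incr n (r+1), ∑ k, HM.dzbar (u I) k z * star (HM.dzbar (u I) k z))
      - ∑ J ∈ HM.Incr n r, ∑ k, ∑ l, HM.dzbar (u (HM.cons' (r+1) k J)) l z
          * star (HM.dzbar (u (HM.cons' (r+1) l J)) k z) := by
    intro z
    unfold HM.dbarSq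
    push_cast
    simp only [hsq]
    exact HM.comb (fun k I => HM.dzbar (u I) k z) (fun k => HM.coeff_dzbar u hua hu z k)
      (fun M => HM.dbarC (r+1) u M z) (fun M => rfl)
  have ht : ∀ z, ((HM.thetaSq (r+1) u z : ℝ) : ℂ)
      = ∑ J ∈ HM.Incr n r, ∑ k, ∑ l, HM.dz (u (HM.cons' (r+1) k J)) k z
          * star (HM.dz (u (HM.cons' (r+1) l J)) l z) := by
    intro z
    unfold HM.thetaSq
    push_cast
    simp only [hsq]
    apply Finset.sum_congr rfl
    intro J _
    unfold HM.thetaC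
    rw [star_neg, neg_mul_neg, star_sum, Finset.sum_mul_sum]
  apply Complex.ofReal_injective
  push_cast
  simp only [← integral_complex_ofReal, hd, ht]
  push_cast
  simp only [hsq]
  have i1 : Integrable (fun z => ∑ I ∈ HM.Incr n (r+1), ∑ k,
      HM.dzbar (u I) k z * star (HM.dzbar (u I) k z)) :=
    integrable_finsetSum _ fun I _ => integrable_finsetSum _ fun k _ => hI1 I k
  have i2 : Integrable (fun z => ∑ J ∈ HM.Incr n r, ∑ k, ∑ l,
      HM.dzbar (u (HM.cons' (r+1) k J)) l z * star (HM.dzbar (u (HM.cons' (r+1) l J)) k z)) :=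
    integrable_finsetSum _ fun I _ => integrable_finsetSum _ fun k _ =>
      integrable_finsetSum _ fun l _ => hI2 _ _ _ _
  rw [integral_sub i1 i2]
  have e1 : ∫ z, ∑ I ∈ HM.Incr n (r+1), ∑ k, HM.dzbar (u I) k z * star (HM.dzbar (u I) k z)
      = ∑ I ∈ HM.Incr n (r+1), ∑ k, ∫ z, HM.dzbar (u I) k z * star (HM.dzbar (u I) k z) := by
    rw [integral_finsetSum _ fun I _ => integrable_finsetSum _ fun k _ => hI1 I k]
    apply Finset.sum_congr rfl
    intro I _
    rw [integral_finsetSum _ fun k _ => hI1 I k]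
  have e2 : ∫ z, ∑ J ∈ HM.Incr n r, ∑ k, ∑ l,
      HM.dzbar (u (HM.cons' (r+1) k J)) l z * star (HM.dzbar (u (HM.cons' (r+1) l J)) k z)
      = ∫ z, ∑ J ∈ HM.Incr n r, ∑ k, ∑ l, HM.dz (u (HM.cons' (r+1) k J)) k z
          * star (HM.dz (u (HM.cons' (r+1) l J)) l z) := by
    rw [integral_finsetSum _ fun I _ => integrable_finsetSum _ fun k _ =>
        integrable_finsetSum _ fun l _ => hI2 _ _ _ _,
      integral_finsetSum _ fun I _ => integrable_finsetSum _ fun k _ =>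
        integrable_finsetSum _ fun l _ => hI3 _ _ _ _]
    apply Finset.sum_congr rfl
    intro J _
    rw [integral_finsetSum _ fun k _ => integrable_finsetSum _ fun l _ => hI2 _ _ _ _,
      integral_finsetSum _ fun k _ => integrable_finsetSum _ fun l _ => hI3 _ _ _ _]
    apply Finset.sum_congr rfl
    intro k _
    rw [integral_finsetSum _ fun l _ => hI2 _ _ _ _, integral_finsetSum _ fun l _ => hI3 _ _ _ _]
    apply Finset.sum_congr rfl
    intro l _
    exact HM.swapC (hu _) (hu _) l k
  rw [e1, e2, sub_add_cancel]
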